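/- arXiv:2303.14810 — 7 statements merged into one kernel-verified Lean document; each statement's English description precedes it below -/
import Mathlib

section
/- Let n ≥ 1, d ≥ 1, and let α = (α_1, …, α_n) ∈ ℕ^n with α_1 + ⋯ + α_n = 2d. Then the polynomial f(x) = ∑_{i=1}^n α_i x_i^{2d} − 2d · x_1^{α_1} ⋯ x_n^{α_n} is a sum of squares of real polynomials, i.e., there exist finitely many polynomials h_1, …, h_m ∈ ℝ[x_1, …, x_n] with f = h_1² + ⋯ + h_m². -/
open Finset MvPolynomial

/-!
The AM-GM inequality follows from an identity. Writing `G(s)` for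
`∑ i ∈ s, aᵢ ^ #s - #s * ∏ i ∈ s, aᵢ` and `#s = n + 1`,
`2 n G(s) = ∑ i j, (aᵢ - aⱼ) (aᵢ ^ n - aⱼ ^ n) + 2 ∑ j, aⱼ G(s \ {j})`,
and `(a - b) (a ^ n - b ^ n)` is `(a - b) ^ 2` times a polynomial with nonnegative coefficients.
So `G(s)` is a sum of squares whenever all the `aᵢ` are. If instead the `aᵢ` are arbitrary but `#s`
is even, split `s` into halves `t` and `u`: then `G(s)` is the sum of the expressions `G(t)` and
`G(u)` for the squares `aᵢ ^ 2`, and of `#t * (∏ i ∈ t, aᵢ - ∏ i ∈ u, aᵢ) ^ 2`. The weights `αᵢ`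
come from repeating `xᵢ` exactly `αᵢ` times.
-/

section SumSq

variable {R : Type*}

theorem isSumSq_pow [CommSemiring R] {a : R} (ha : IsSumSq a) (n : ℕ) : IsSumSq (a ^ n) :=
  Subsemiring.mem_sumSq.1 (pow_mem (Subsemiring.mem_sumSq.2 ha) n)

theorem isSumSq_of_mul_left [CommSemiring R] {u a : R} (hu : IsUnit u) (hsq : IsSumSq u)
    (hua : IsSumSq (u * a)) : IsSumSq a := by
  obtain ⟨v, huv⟩ := hu.exists_right_inv
  have a_eq : a = u * (v * v) * (u * a) := by
    calc a = (u * v) * (u * v) * a := by rw [huv, one_mul, one_mul]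
      _ = u * (v * v) * (u * a) := by ring
  rw [a_eq]
  exact (hsq.mul (.mul_self v)).mul hua

theorem isSumSq_sub_mul_pow_sub_pow [CommRing R] {a b : R} (ha : IsSumSq a) (hb : IsSumSq b)
    (n : ℕ) : IsSumSq ((a - b) * (a ^ n - b ^ n)) := by
  rw [← (Commute.all a b).mul_geom_sum₂ n, ← mul_assoc]
  exact (IsSumSq.mul_self _).mul
    (.sum fun i _ => (isSumSq_pow ha i).mul (isSumSq_pow hb (n - 1 - i)))

theorem exists_eq_sum_sq_of_isSumSq [Semiring R] {a : R} (ha : IsSumSq a) :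
    ∃ (m : ℕ) (h : Fin m → R), a = ∑ j, h j ^ 2 := by
  induction ha with
  | zero => exact ⟨0, Fin.elim0, by simp⟩
  | sq_add b _ ih =>
    obtain ⟨m, h, rfl⟩ := ih
    exact ⟨m + 1, Fin.cons b h, by simp [Fin.sum_univ_succ, sq]⟩

end SumSq

theorem isUnit_natCast_of_rat_algebra {R : Type*} [Semiring R] [Algebra ℚ R] {n : ℕ} (hn : n ≠ 0) :
    IsUnit (n : R) := by
  simpa using (IsUnit.mk0 (n : ℚ) (Nat.cast_ne_zero.2 hn)).map (algebraMap ℚ R)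

theorem sum_sum_sub_mul_sub {ι R : Type*} [NonAssocRing R] (s : Finset ι) (f g : ι → R) :
    ∑ i ∈ s, ∑ j ∈ s, (f i - f j) * (g i - g j) =
      2 * (#s * ∑ i ∈ s, f i * g i - (∑ i ∈ s, f i) * ∑ i ∈ s, g i) := by
  simp only [sub_mul, mul_sub, sum_sub_distrib, sum_const, nsmul_eq_mul, ← mul_sum, ← sum_mul,
    two_mul]
  abel

section AMGM

variable {ι R : Type*} [CommRing R]

/-- The difference between the two sides of the AM-GM inequality for the numbers `a i ^ #s`, scaled
by `#s` so as to make sense in every commutative ring. -/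
def amgmGap (s : Finset ι) (a : ι → R) : R :=
  ∑ i ∈ s, a i ^ #s - #s * ∏ i ∈ s, a i

theorem sum_mul_amgmGap_erase [DecidableEq ι] {s : Finset ι} {n : ℕ} (hs : #s = n + 1)
    (a : ι → R) :
    ∑ j ∈ s, a j * amgmGap (s.erase j) a =
      (∑ j ∈ s, a j) * ∑ i ∈ s, a i ^ n - ∑ i ∈ s, a i ^ (n + 1)
        - (n + 1) * (n * ∏ i ∈ s, a i) := by
  have mul_gap : ∀ j ∈ s, a j * amgmGap (s.erase j) a =
      a j * ∑ i ∈ s, a i ^ n - a j ^ (n + 1) - n * ∏ i ∈ s, a i := by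
    intro j hj
    rw [amgmGap, card_erase_of_mem hj, hs, Nat.add_sub_cancel, ← mul_prod_erase s a hj,
      ← add_sum_erase s (fun i => a i ^ n) hj]
    ring
  rw [sum_congr rfl mul_gap, sum_sub_distrib, sum_sub_distrib, ← sum_mul, sum_const, hs,
    nsmul_eq_mul, Nat.cast_succ]

theorem two_mul_mul_amgmGap [DecidableEq ι] {s : Finset ι} {n : ℕ} (hs : #s = n + 1) (a : ι → R) :
    ((2 * n : ℕ) : R) * amgmGap s a =
      ∑ i ∈ s, ∑ j ∈ s, (a i - a j) * (a i ^ n - a j ^ n)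
        + 2 * ∑ j ∈ s, a j * amgmGap (s.erase j) a := by
  rw [sum_sum_sub_mul_sub s a (a · ^ n), sum_mul_amgmGap_erase hs, amgmGap, hs]
  simp only [← pow_succ']
  push_cast
  ring

theorem amgmGap_of_card_le_one {s : Finset ι} (hs : #s ≤ 1) (a : ι → R) : amgmGap s a = 0 := by
  obtain hs | hs := Nat.le_one_iff_eq_zero_or_eq_one.1 hs
  · obtain rfl := card_eq_zero.1 hs
    simp [amgmGap]
  · obtain ⟨i, rfl⟩ := card_eq_one.1 hs
    simp [amgmGap]

theorem amgmGap_sdiff_add_amgmGap [DecidableEq ι] {s t : Finset ι} (hts : t ⊆ s)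
    (hs : #s = 2 * #t) (a : ι → R) :
    amgmGap s a = amgmGap (s \ t) (a ^ 2) + amgmGap t (a ^ 2)
      + #t * (∏ i ∈ s \ t, a i - ∏ i ∈ t, a i) ^ 2 := by
  have card_sdiff_eq : #(s \ t) = #t := by rw [card_sdiff_of_subset hts, hs]; omega
  simp only [amgmGap, card_sdiff_eq, hs, Pi.pow_apply, ← pow_mul, prod_pow,
    ← sum_sdiff hts, ← prod_sdiff hts]
  push_cast
  ring

theorem amgmGap_sigma_range (s : Finset ι) (α : ι → ℕ) (x : ι → R) :
    amgmGap (s.sigma fun i => range (α i)) (fun p => x p.1) =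
      ∑ i ∈ s, α i * x i ^ (∑ j ∈ s, α j) - (∑ j ∈ s, α j : ℕ) * ∏ i ∈ s, x i ^ α i := by
  simp [amgmGap, sum_sigma, prod_sigma]

variable [Algebra ℚ R]

theorem isSumSq_amgmGap (s : Finset ι) {a : ι → R} (ha : ∀ i ∈ s, IsSumSq (a i)) :
    IsSumSq (amgmGap s a) := by
  classical
  induction s using Finset.strongInduction with
  | H s ih =>
    obtain hs | hs := le_or_gt #s 1
    · exact amgmGap_of_card_le_one hs a ▸ .zero
    obtain ⟨n, hn⟩ : ∃ n, #s = n + 1 := ⟨#s - 1, by omega⟩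
    have gap_erase : ∀ j ∈ s, IsSumSq (amgmGap (s.erase j) a) := fun j hj =>
      ih _ (erase_ssubset hj) fun i hi => ha i (mem_of_mem_erase hi)
    refine isSumSq_of_mul_left (isUnit_natCast_of_rat_algebra (by omega))
      (.natCast (2 * n)) ?_
    rw [two_mul_mul_amgmGap hn]
    exact .add (.sum fun i hi => .sum fun j hj => isSumSq_sub_mul_pow_sub_pow (ha i hi) (ha j hj) n)
      (.mul (.natCast 2) (.sum fun j hj => (ha j hj).mul (gap_erase j hj)))

theorem isSumSq_amgmGap_of_even_card {s : Finset ι} (hs : Even #s) (a : ι → R) :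
    IsSumSq (amgmGap s a) := by
  classical
  have isSumSq_sq (b : R) : IsSumSq (b ^ 2) := (IsSquare.sq b).isSumSq
  obtain ⟨d, hd⟩ := hs.two_dvd
  obtain ⟨t, hts, rfl⟩ := exists_subset_card_eq (show d ≤ #s by omega)
  rw [amgmGap_sdiff_add_amgmGap hts hd]
  exact ((isSumSq_amgmGap _ fun i _ => isSumSq_sq (a i)).add
    (isSumSq_amgmGap _ fun i _ => isSumSq_sq (a i))).add
      ((IsSumSq.natCast _).mul (isSumSq_sq _))

theorem hurwitz_reznick_sos_general (s : Finset ι) {d : ℕ} {α : ι → ℕ}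
    (hα : ∑ i ∈ s, α i = 2 * d) (x : ι → R) :
    IsSumSq (∑ i ∈ s, α i * x i ^ (2 * d) - (2 * d : ℕ) * ∏ i ∈ s, x i ^ α i) := by
  rw [← hα, ← amgmGap_sigma_range]
  apply isSumSq_amgmGap_of_even_card
  simp [hα]

end AMGM

theorem hurwitz_reznick_sos {n d : ℕ} (hn : 1 ≤ n) (hd : 1 ≤ d)
    (α : Fin n → ℕ) (hα : ∑ i, α i = 2 * d) :
    ∃ (m : ℕ) (h : Fin m → MvPolynomial (Fin n) ℝ),
      (∑ i, MvPolynomial.C ((α i : ℕ) : ℝ) * MvPolynomial.X i ^ (2 * d)) -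
          MvPolynomial.C ((2 * d : ℕ) : ℝ) * ∏ i, MvPolynomial.X i ^ α i =
        ∑ j, h j ^ 2 := by
  simpa only [C_eq_coe_nat] using
    exists_eq_sum_sq_of_isSumSq (hurwitz_reznick_sos_general univ hα X)
end

section
/- Let f ∈ ℝ[x_1, …, x_n] be nonnegative on ℝ^n, i.e., f(x) ≥ 0 for all x ∈ ℝ^n. Let α ∈ ℕ^n be an exponent vector in the support of f whose image in ℝ^n is an extreme point of the Newton polytope N(f) (the convex hull in ℝ^n of the support of f). Then the coefficient of the monomial x_1^{α_1} ⋯ x_n^{α_n} in f is strictly positive, and every entry α_i is even. -/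
open Finset

/-! By Hahn–Banach, a vertex `α` of the Newton polytope is the unique maximiser over the support of
some linear functional `w`. Evaluating `f` along the curve `t ↦ (εᵢ exp (t wᵢ))ᵢ`, the monomial `α`
dominates as `t → ∞`, so nonnegativity of `f` forces `0 ≤ c_α ε ^ α` for every `ε`. Taking `ε = 1`
gives the sign of `c_α`; flipping the sign of the single coordinate `εᵢ` gives the parity of
`αᵢ`. -/

open Filter Topology

section Convex

theorem mem_extremePoints_of_forall_midpoint {𝕜 E : Type*} [Field 𝕜] [LinearOrder 𝕜]
    [IsStrictOrderedRing 𝕜] [AddCommGroup E] [Module 𝕜 E] {A : Set E} {x : E}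
    (hA : Convex 𝕜 A) (hx : x ∈ A)
    (hmid : ∀ y ∈ A, ∀ z ∈ A, x = midpoint 𝕜 y z → y = z) :
    x ∈ A.extremePoints 𝕜 := by
  refine mem_extremePoints_iff_left.2 ⟨hx, ?_⟩
  rintro y hy z hz ⟨a, b, ha, hb, hab, rfl⟩
  set m := min a b
  have hm : 0 < m := lt_min ha hb
  have hma : m ≤ a := min_le_left a b
  have hmb : m ≤ b := min_le_right a b
  -- The two points `x ± m • (y - z)` lie in `A` and have midpoint `x`.
  have hshift : (a + m) • y + (b - m) • z = (a - m) • y + (b + m) • z := by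
    refine hmid _ (hA hy hz (by linarith) (by linarith) (by linarith)) _
      (hA hy hz (by linarith) (by linarith) (by linarith)) ?_
    rw [midpoint_eq_smul_add, invOf_eq_inv]
    module
  have hyz : (2 * m) • (y - z) = 0 := by
    linear_combination (norm := module) hshift
  obtain rfl : y = z := by
    simpa [hm.ne', sub_eq_zero] using hyz
  rw [← add_smul, hab, one_smul]

theorem exists_strongDual_lt_of_mem_extremePoints_convexHull {E : Type*} [AddCommGroup E]
    [Module ℝ E] [TopologicalSpace E] [IsTopologicalAddGroup E] [ContinuousSMul ℝ E]
    [LocallyConvexSpace ℝ E] [T2Space E] {S : Set E} (hS : S.Finite) {x : E}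
    (hx : x ∈ (convexHull ℝ S).extremePoints ℝ) :
    ∃ l : StrongDual ℝ E, ∀ y ∈ S, y ≠ x → l y < l x := by
  have hx_notMem : x ∉ convexHull ℝ (S \ {x}) := fun h =>
    ((convex_convexHull ℝ S).mem_extremePoints_iff_mem_sdiff_convexHull_sdiff.1 hx).2
      (convexHull_mono (Set.sdiff_subset_sdiff_left (subset_convexHull ℝ S)) h)
  obtain ⟨l, u, hl, hu⟩ := geometric_hahn_banach_closed_point (convex_convexHull ℝ _)
    (hS.sdiff.isClosed_convexHull ℝ) hx_notMem
  exact ⟨l, fun y hy hyx => (hl y (subset_convexHull ℝ _ ⟨hy, hyx⟩)).trans hu⟩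

end Convex

section ExponentialSum

variable {ι : Type*} {s : Finset ι} {r : ι → ℝ} {i : ι}

theorem tendsto_sum_mul_exp_sub_atTop (c : ι → ℝ) (hi : i ∈ s)
    (hr : ∀ j ∈ s, j ≠ i → r j < r i) :
    Tendsto (fun t => ∑ j ∈ s, c j * Real.exp (t * (r j - r i))) atTop (𝓝 (c i)) := by
  classical
  have hterm : ∀ j ∈ s, Tendsto (fun t => c j * Real.exp (t * (r j - r i))) atTop
      (𝓝 (if j = i then c j else 0)) := by
    intro j hj
    split_ifs with hji
    · simp [hji]
    · have hexp : Tendsto (fun t => Real.exp (t * (r j - r i))) atTop (𝓝 0) :=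
        Real.tendsto_exp_atBot.comp
          (tendsto_id.atTop_mul_const_of_neg (sub_neg.2 (hr j hj hji)))
      simpa using hexp.const_mul (c j)
  simpa [hi] using tendsto_finsetSum s hterm

theorem dominant_coeff_nonneg_of_eventually_sum_mul_exp_nonneg {c : ι → ℝ} (hi : i ∈ s)
    (hr : ∀ j ∈ s, j ≠ i → r j < r i)
    (h : ∀ᶠ t in atTop, 0 ≤ ∑ j ∈ s, c j * Real.exp (t * r j)) : 0 ≤ c i := by
  refine ge_of_tendsto (tendsto_sum_mul_exp_sub_atTop c hi hr) (h.mono fun t ht => ?_)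
  calc 0 ≤ (∑ j ∈ s, c j * Real.exp (t * r j)) * Real.exp (-(t * r i)) :=
        mul_nonneg ht (Real.exp_pos _).le
    _ = ∑ j ∈ s, c j * Real.exp (t * (r j - r i)) := by
        simp only [sum_mul, mul_assoc, ← Real.exp_add, ← sub_eq_add_neg, ← mul_sub]

end ExponentialSum

section NewtonPolytope

variable {σ : Type*}

/-- The exponent vector `β` as a point of `ℝ^σ`, bundled as an additive map so that a linear
functional on `ℝ^σ` restricts to a weight on exponents. -/
def exponentVector : (σ →₀ ℕ) →+ (σ → ℝ) where
  toFun β i := β i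
  map_zero' := by ext; simp
  map_add' β γ := by ext; simp

theorem exponentVector_injective : Function.Injective (exponentVector (σ := σ)) :=
  fun _ _ h => Finsupp.ext fun i => Nat.cast_injective (congrFun h i)

theorem map_exponentVector [DecidableEq σ] {M : Type*} [AddCommMonoid M] [Module ℝ M]
    (l : (σ → ℝ) →ₗ[ℝ] M) (β : σ →₀ ℕ) :
    l (exponentVector β) = Finsupp.weight (fun i => l (Pi.single i 1)) β := by
  suffices h : l.toAddMonoidHom.comp exponentVector =
      Finsupp.weight (fun i => l (Pi.single i 1)) from DFunLike.congr_fun h β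
  refine Finsupp.addHom_ext fun i k => ?_
  have hsingle : exponentVector (Finsupp.single i k) = k • (Pi.single i 1 : σ → ℝ) := by
    ext j
    simp [exponentVector, Finsupp.single_apply, Pi.single_apply, eq_comm]
  calc l (exponentVector (Finsupp.single i k)) = k • l (Pi.single i 1) := by
        rw [hsingle, map_nsmul]
    _ = _ := (Finsupp.weight_single (fun i => l (Pi.single i 1)) i k).symm

/-- The Newton polytope of `f`: the convex hull in `ℝ^σ` of the exponent vectors in its support. The
set `σ` of variables may be infinite, so the ambient space is the full function space. -/
def newtonPolytope {R : Type*} [CommSemiring R] (f : MvPolynomial σ R) : Set (σ → ℝ) :=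
  convexHull ℝ (exponentVector '' (f.support : Set (σ →₀ ℕ)))

variable {R : Type*} [CommSemiring R] {f : MvPolynomial σ R} {α : σ →₀ ℕ}

theorem mem_support_of_mem_extremePoints_newtonPolytope
    (hα : exponentVector α ∈ (newtonPolytope f).extremePoints ℝ) : α ∈ f.support :=
  exponentVector_injective.mem_set_image.1 (extremePoints_convexHull_subset hα)

theorem exists_weight_lt_of_mem_extremePoints_newtonPolytope
    (hα : exponentVector α ∈ (newtonPolytope f).extremePoints ℝ) :
    ∃ w : σ → ℝ, ∀ β ∈ f.support, β ≠ α → Finsupp.weight w β < Finsupp.weight w α := by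
  classical
  obtain ⟨l, hl⟩ := exists_strongDual_lt_of_mem_extremePoints_convexHull
    (f.support.finite_toSet.image exponentVector) hα
  refine ⟨fun i => l.toLinearMap (Pi.single i 1), fun β hβ hβα => ?_⟩
  simp only [← map_exponentVector]
  exact hl _ (Set.mem_image_of_mem _ hβ) (exponentVector_injective.ne hβα)

end NewtonPolytope

section NonnegativePolynomial

variable {σ : Type*} {f : MvPolynomial σ ℝ} {α : σ →₀ ℕ}

theorem eval_mul_exp_eq_sum (f : MvPolynomial σ ℝ) (ε w : σ → ℝ) (t : ℝ) :
    MvPolynomial.eval (fun i => ε i * Real.exp (t * w i)) f =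
      ∑ β ∈ f.support, (f.coeff β * β.prod fun i k => ε i ^ k) *
        Real.exp (t * Finsupp.weight w β) := by
  rw [MvPolynomial.eval_eq]
  refine sum_congr rfl fun β _ => ?_
  have hexp : Real.exp (t * Finsupp.weight w β) = ∏ i ∈ β.support, Real.exp (t * w i) ^ β i := by
    simp only [Finsupp.weight_apply, Finsupp.sum, mul_sum, Real.exp_sum, ← Real.exp_nat_mul,
      nsmul_eq_mul, mul_left_comm]
  rw [hexp, mul_assoc, Finsupp.prod, ← prod_mul_distrib]
  simp only [mul_pow]

theorem coeff_mul_prod_pow_nonneg_of_weight_lt (hf : ∀ x : σ → ℝ, 0 ≤ MvPolynomial.eval x f)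
    (hα : α ∈ f.support) {w : σ → ℝ}
    (hw : ∀ β ∈ f.support, β ≠ α → Finsupp.weight w β < Finsupp.weight w α) (ε : σ → ℝ) :
    0 ≤ f.coeff α * α.prod fun i k => ε i ^ k :=
  dominant_coeff_nonneg_of_eventually_sum_mul_exp_nonneg
    (c := fun β => f.coeff β * β.prod fun i k => ε i ^ k) hα hw <|
    .of_forall fun t => (hf _).trans_eq (eval_mul_exp_eq_sum f ε w t)

theorem prod_mulSingle_pow {M : Type*} [CommMonoid M] [DecidableEq σ] (α : σ →₀ ℕ) (i : σ)
    (a : M) : (α.prod fun j k => (Pi.mulSingle i a : σ → M) j ^ k) = a ^ α i := by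
  rw [Finsupp.prod_eq_single i]
  · simp
  · intro j _ hji
    simp [Pi.mulSingle_eq_of_ne hji]
  · simp

theorem vertex_coeff_pos_and_even_general (hf : ∀ x : σ → ℝ, 0 ≤ MvPolynomial.eval x f)
    (hα : exponentVector α ∈ (newtonPolytope f).extremePoints ℝ) :
    0 < f.coeff α ∧ ∀ i, Even (α i) := by
  classical
  have hαf : α ∈ f.support := mem_support_of_mem_extremePoints_newtonPolytope hα
  obtain ⟨w, hw⟩ := exists_weight_lt_of_mem_extremePoints_newtonPolytope hα
  have hsign := coeff_mul_prod_pow_nonneg_of_weight_lt hf hαf hw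
  have hpos : 0 < f.coeff α :=
    lt_of_le_of_ne (by simpa using hsign 1) (MvPolynomial.mem_support_iff.1 hαf).symm
  refine ⟨hpos, fun i => Nat.not_odd_iff_even.1 fun hodd => ?_⟩
  have hneg := hsign (Pi.mulSingle i (-1))
  rw [prod_mulSingle_pow, hodd.neg_one_pow] at hneg
  linarith

end NonnegativePolynomial

theorem vertex_coeff_pos_and_even {n : ℕ} (f : MvPolynomial (Fin n) ℝ)
    (hf : ∀ x : Fin n → ℝ, 0 ≤ MvPolynomial.eval x f)
    (α : Fin n →₀ ℕ) (hα : α ∈ f.support)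
    (N : Set (Fin n → ℝ))
    (hN : N = convexHull ℝ
      ((fun β : Fin n →₀ ℕ => fun i => (β i : ℝ)) '' (f.support : Set (Fin n →₀ ℕ))))
    (hext : ∀ y ∈ N, ∀ z ∈ N, (fun i => (α i : ℝ)) = midpoint ℝ y z → y = z) :
    0 < f.coeff α ∧ ∀ i, Even (α i) := by
  subst hN
  exact vertex_coeff_pos_and_even_general hf <| mem_extremePoints_of_forall_midpoint
    (convex_convexHull ℝ _) (subset_convexHull ℝ _ (Set.mem_image_of_mem _ hα)) hext
end

section
/- Let α, β ∈ ℕ^k be such that β is not a permutation of α (there is no permutation σ of {1, …, k} with β_i = α_{σ(i)} for all i). Let f(x) = x_1^{β_1} ⋯ x_k^{β_k} − x_1^{α_1} ⋯ x_k^{α_k}. If the symmetrization f_sym is nonnegative on all of ℝ^k, then β_i is even for every i ∈ {1, …, k}. -/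
open Finset

/-!
Averaging a polynomial `p` over all sign changes of its variables kills every monomial with an odd
exponent and fixes the others. If `p` is nonnegative and not identically zero, the average is
positive at some point, hence `p` has a monomial with positive coefficient and only even exponents.
A permutation of the variables preserves this kind of monomial, so if `p` is the symmetrization of
`f`, then `f` has one too. For `f = x^β - x^α` it can only be `x^β`.
-/

open MvPolynomial

section SignAverage

variable {ι R : Type*} [CommRing R]

lemma sum_units_int_smul_pow (a : R) (n : ℕ) :
    ∑ u : ℤˣ, (u • a) ^ n = if Even n then 2 * a ^ n else 0 := by
  rw [UnitsInt.univ, sum_pair (by decide), one_smul, Units.neg_smul, one_smul]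
  split_ifs with hn
  · rw [hn.neg_pow, two_mul]
  · rw [(Nat.not_even_iff_odd.mp hn).neg_pow, add_neg_cancel]

lemma sum_eval_sign_smul_monomial [Fintype ι] [DecidableEq ι] (x : ι → R) (γ : ι →₀ ℕ) (c : R) :
    ∑ s : ι → ℤˣ, eval (s • x) (monomial γ c) =
      if ∀ i, Even (γ i) then 2 ^ Fintype.card ι * eval x (monomial γ c) else 0 := by
  have factor : ∑ s : ι → ℤˣ, eval (s • x) (monomial γ c) =
      c * ∏ i, if Even (γ i) then 2 * x i ^ γ i else 0 := by
    simp_rw [eval_monomial, Finsupp.prod_pow, Pi.smul_apply', ← mul_sum,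
      ← sum_units_int_smul_pow, Fintype.prod_sum]
  rw [factor]
  split_ifs with hγ
  · simp only [hγ, if_true, prod_mul_distrib, prod_const, card_univ, eval_monomial,
      Finsupp.prod_pow]
    ring
  · obtain ⟨i, hi⟩ := not_forall.mp hγ
    rw [prod_eq_zero (mem_univ i) (if_neg hi), mul_zero]

variable [LinearOrder R] [IsStrictOrderedRing R]

lemma coeff_pos_of_eval_monomial_pos_of_even {x : ι → R} {γ : ι →₀ ℕ} {c : R}
    (hγ : ∀ i, Even (γ i)) (h : 0 < eval x (monomial γ c)) : 0 < c := by
  rw [eval_monomial] at h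
  exact pos_of_mul_pos_left h (prod_nonneg fun i _ => (hγ i).pow_nonneg (x i))

theorem exists_coeff_pos_even_of_eval_nonneg [Finite ι] {p : MvPolynomial ι R} (hp : p ≠ 0)
    (hnonneg : ∀ x, 0 ≤ eval x p) : ∃ γ : ι →₀ ℕ, (∀ i, Even (γ i)) ∧ 0 < coeff γ p := by
  classical
  cases nonempty_fintype ι
  obtain ⟨x, hx⟩ : ∃ x, 0 < eval x p := by
    by_contra! hnonpos
    exact hp (MvPolynomial.funext fun x => by simpa using (hnonpos x).antisymm (hnonneg x))
  have hsum : 0 < ∑ s : ι → ℤˣ, eval (s • x) p :=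
    sum_pos' (fun s _ => hnonneg _) ⟨1, mem_univ _, by rwa [one_smul]⟩
  have expand : ∑ s : ι → ℤˣ, eval (s • x) p =
      ∑ γ ∈ p.support, ∑ s : ι → ℤˣ, eval (s • x) (monomial γ (coeff γ p)) := by
    rw [sum_comm]
    simp_rw [← map_sum, support_sum_monomial_coeff]
  rw [expand] at hsum
  obtain ⟨γ, -, hγ⟩ := exists_lt_of_sum_lt (sum_const_zero.trans_lt hsum)
  rw [sum_eval_sign_smul_monomial] at hγ
  split_ifs at hγ with heven
  · exact ⟨γ, heven, coeff_pos_of_eval_monomial_pos_of_even heven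
      (pos_of_mul_pos_right hγ (by positivity))⟩
  · exact absurd hγ (lt_irrefl 0)

end SignAverage

section Symmetrization

variable {ι R : Type*} [Fintype ι] [DecidableEq ι] [CommSemiring R]

/-- The symmetrization `f_sym = ∑ σ, f (x ∘ σ)` of a polynomial, without dividing by the number of
permutations. -/
noncomputable def symmetrization (f : MvPolynomial ι R) : MvPolynomial ι R :=
  ∑ σ : Equiv.Perm ι, rename σ f

lemma eval_symmetrization (x : ι → R) (f : MvPolynomial ι R) :
    eval x (symmetrization f) = ∑ σ : Equiv.Perm ι, eval (x ∘ σ) f := by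
  simp only [symmetrization, map_sum, eval_rename]

lemma coeff_symmetrization (γ : ι →₀ ℕ) (f : MvPolynomial ι R) :
    coeff γ (symmetrization f) = ∑ σ : Equiv.Perm ι, coeff (γ.equivMapDomain σ) f := by
  rw [symmetrization, coeff_sum, ← Equiv.sum_comp (Equiv.inv (Equiv.Perm ι))]
  refine sum_congr rfl fun σ _ => ?_
  have hγ : (γ.equivMapDomain σ).mapDomain ⇑σ⁻¹ = γ := by
    ext i
    simp
  rw [Equiv.inv_apply, ← coeff_rename_mapDomain _ σ⁻¹.injective f, hγ]

end Symmetrization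

section NonnegativeSymmetrization

variable {ι R : Type*} [Fintype ι] [DecidableEq ι]
  [CommRing R] [LinearOrder R] [IsStrictOrderedRing R]

theorem exists_coeff_pos_even_of_symmetrization_nonneg {f : MvPolynomial ι R}
    (hne : symmetrization f ≠ 0) (hnonneg : ∀ x, 0 ≤ eval x (symmetrization f)) :
    ∃ γ : ι →₀ ℕ, (∀ i, Even (γ i)) ∧ 0 < coeff γ f := by
  obtain ⟨γ, heven, hpos⟩ := exists_coeff_pos_even_of_eval_nonneg hne hnonneg
  rw [coeff_symmetrization] at hpos
  obtain ⟨σ, -, hσ⟩ := exists_lt_of_sum_lt (sum_const_zero.trans_lt hpos)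
  exact ⟨γ.equivMapDomain σ, fun i => heven (σ.symm i), hσ⟩

lemma symmetrization_monomial_sub_monomial_ne_zero {α β : ι →₀ ℕ}
    (hperm : ∀ σ : Equiv.Perm ι, β.equivMapDomain σ ≠ α) :
    symmetrization (monomial β (1 : R) - monomial α 1) ≠ 0 := by
  suffices 0 < coeff β (symmetrization (monomial β (1 : R) - monomial α 1)) from
    fun h => this.ne' (by rw [h, coeff_zero])
  simp only [coeff_symmetrization, coeff_sub, coeff_monomial, (hperm _).symm, if_false, sub_zero]
  have identity_term : (0 : R) < if β = β.equivMapDomain (Equiv.refl ι) then 1 else 0 := by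
    rw [if_pos (Finsupp.equivMapDomain_refl β).symm]
    exact one_pos
  exact sum_pos' (fun σ _ => by positivity) ⟨Equiv.refl ι, mem_univ _, identity_term⟩

theorem beta_even_of_symmetrization_nonneg_general (α β : ι → ℕ)
    (hperm : ¬ ∃ σ : Equiv.Perm ι, ∀ i, β i = α (σ i))
    (hsym : ∀ x : ι → R,
      0 ≤ ∑ σ : Equiv.Perm ι, ((∏ i, x (σ i) ^ β i) - ∏ i, x (σ i) ^ α i)) :
    ∀ i, Even (β i) := by
  let a := Finsupp.equivFunOnFinite.symm α
  let b := Finsupp.equivFunOnFinite.symm β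
  have hne : symmetrization (monomial b (1 : R) - monomial a 1) ≠ 0 := by
    refine symmetrization_monomial_sub_monomial_ne_zero fun σ hσ => hperm ⟨σ, fun i => ?_⟩
    simpa [a, b] using DFunLike.congr_fun hσ (σ i)
  have hnonneg (x : ι → R) : 0 ≤ eval x (symmetrization (monomial b (1 : R) - monomial a 1)) := by
    simpa [eval_symmetrization, eval_monomial, Finsupp.prod_pow, a, b] using hsym x
  obtain ⟨γ, heven, hpos⟩ := exists_coeff_pos_even_of_symmetrization_nonneg hne hnonneg
  rw [coeff_sub, coeff_monomial, coeff_monomial] at hpos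
  obtain rfl : b = γ := by
    by_contra hb
    rw [if_neg hb] at hpos
    split_ifs at hpos <;> linarith
  exact heven

end NonnegativeSymmetrization

theorem beta_even_of_symmetrization_nonneg {k : ℕ} (α β : Fin k → ℕ)
    (hperm : ¬ ∃ σ : Equiv.Perm (Fin k), ∀ i, β i = α (σ i))
    (hsym : ∀ x : Fin k → ℝ,
      0 ≤ ∑ σ : Equiv.Perm (Fin k),
        ((∏ i, x (σ i) ^ β i) - ∏ i, x (σ i) ^ α i)) :
    ∀ i, Even (β i) :=
  beta_even_of_symmetrization_nonneg_general α β hperm hsym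
end

section
/- Let α_1 ≤ α_2 and β_1 ≤ β_2 be natural numbers with α_1 + α_2 = β_1 + β_2 and (α_1, α_2) ≠ (β_1, β_2). Let f(x_1, x_2) = x_1^{β_1} x_2^{β_2} − x_1^{α_1} x_2^{α_2}. If the symmetrization f_sym(x_1, x_2) = x_1^{β_1} x_2^{β_2} + x_1^{β_2} x_2^{β_1} − x_1^{α_1} x_2^{α_2} − x_1^{α_2} x_2^{α_1} is nonnegative on ℝ², then there exist a, b, c ∈ ℕ with α_1 = 2a + c, α_2 = 2(a + b) + c, β_1 = 2a, and β_2 = 2(a + b + c). -/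
open Finset

/-!
Evaluating at `(1, 2)` forces `α₂ ≤ β₂`, hence `β₁ < α₁ ≤ α₂ < β₂` as the two pairs differ and have
the same sum. At a point with `|x| = 1` and `|y| > 3` the monomial `x ^ β₁ * y ^ β₂` is then larger
in absolute value than the other three together, so it must be positive there; the points `(-1, 4)`
and `(1, -4)` show that `β₁` and `β₂` are even.
-/

section PowSums

variable {R : Type*} [Semiring R] [PartialOrder R] [IsStrictOrderedRing R] {b : R}

theorem le_of_pow_add_pow_le_pow_add_pow {i j k l : ℕ} (hb : 2 ≤ b) (hlk : l ≤ k)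
    (h : b ^ i + b ^ j ≤ b ^ k + b ^ l) : i ≤ k := by
  have hb₁ : 1 ≤ b := one_le_two.trans hb
  have hb₀ : 0 < b := zero_lt_one.trans_le hb₁
  by_contra! hki
  refine lt_irrefl (b ^ i) ?_
  calc
    b ^ i < b ^ i + b ^ j := lt_add_of_pos_right _ (pow_pos hb₀ j)
    _ ≤ b ^ k + b ^ l := h
    _ ≤ b ^ k + b ^ k := by gcongr
    _ = b ^ k * 2 := (mul_two _).symm
    _ ≤ b ^ k * b := by gcongr
    _ = b ^ (k + 1) := (pow_succ b k).symm
    _ ≤ b ^ i := pow_le_pow_right₀ hb₁ hki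

theorem pow_add_pow_add_pow_lt_pow {i j k n : ℕ} (hb : 3 < b) (hi : i < n) (hj : j < n)
    (hk : k < n) : b ^ i + b ^ j + b ^ k < b ^ n := by
  have hb₁ : 1 ≤ b := (Nat.one_le_ofNat (α := R)).trans hb.le
  have hb₀ : 0 < b := zero_lt_one.trans_le hb₁
  obtain ⟨m, rfl⟩ := Nat.exists_eq_add_one_of_ne_zero (Nat.ne_zero_of_lt hi)
  have pow_le {r : ℕ} (hr : r < m + 1) : b ^ r ≤ b ^ m :=
    pow_le_pow_right₀ hb₁ (Nat.le_of_lt_succ hr)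
  calc
    b ^ i + b ^ j + b ^ k ≤ b ^ m + b ^ m + b ^ m :=
      add_le_add (add_le_add (pow_le hi) (pow_le hj)) (pow_le hk)
    _ = b ^ m * 3 := by rw [← two_add_one_eq_three, mul_add, mul_two, mul_one]
    _ < b ^ m * b := mul_lt_mul_of_pos_left hb (pow_pos hb₀ m)
    _ = b ^ (m + 1) := (pow_succ b m).symm

end PowSums

section LinearOrderedRing

variable {R : Type*} [CommRing R] [LinearOrder R] [IsStrictOrderedRing R]

theorem even_of_pow_pos_of_neg {a : R} {n : ℕ} (ha : a < 0) (h : 0 < a ^ n) : Even n :=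
  Nat.not_odd_iff_even.mp fun hn => h.not_gt (hn.pow_neg ha)

theorem pow_mul_pow_pos_of_symmetrization_le {α₁ α₂ β₁ β₂ : ℕ} {x y : R}
    (hβ : β₁ < β₂) (hα₁ : α₁ < β₂) (hα₂ : α₂ < β₂) (hx : |x| = 1) (hy : 3 < |y|)
    (h : x ^ α₁ * y ^ α₂ + x ^ α₂ * y ^ α₁ ≤ x ^ β₁ * y ^ β₂ + x ^ β₂ * y ^ β₁) :
    0 < x ^ β₁ * y ^ β₂ := by
  have abs_monomial (i j : ℕ) : |x ^ i * y ^ j| = |y| ^ j := by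
    rw [abs_mul, abs_pow, abs_pow, hx, one_pow, one_mul]
  have neg_le_monomial (i j : ℕ) : -|y| ^ j ≤ x ^ i * y ^ j :=
    abs_monomial i j ▸ neg_abs_le _
  have monomial_le (i j : ℕ) : x ^ i * y ^ j ≤ |y| ^ j :=
    abs_monomial i j ▸ le_abs_self _
  have dominated : |y| ^ α₂ + |y| ^ α₁ + |y| ^ β₁ < |y| ^ β₂ :=
    pow_add_pow_add_pow_lt_pow hy hα₂ hα₁ hβ
  have neg_lt : -|y| ^ β₂ < x ^ β₁ * y ^ β₂ := by
    linarith [neg_le_monomial α₁ α₂, neg_le_monomial α₂ α₁, monomial_le β₂ β₁]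
  by_contra! nonpos
  rw [← abs_monomial β₁ β₂, abs_of_nonpos nonpos, neg_neg] at neg_lt
  exact lt_irrefl _ neg_lt

theorem two_factor_characterization_general (α₁ α₂ β₁ β₂ : ℕ)
    (hα : α₁ ≤ α₂) (hβ : β₁ ≤ β₂)
    (hsum : α₁ + α₂ = β₁ + β₂)
    (hne : (α₁, α₂) ≠ (β₁, β₂))
    (hsym : ∀ x₁ x₂ : R,
      0 ≤ x₁ ^ β₁ * x₂ ^ β₂ + x₁ ^ β₂ * x₂ ^ β₁ - x₁ ^ α₁ * x₂ ^ α₂ - x₁ ^ α₂ * x₂ ^ α₁) :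
    ∃ a b c : ℕ, α₁ = 2 * a + c ∧ α₂ = 2 * (a + b) + c ∧ β₁ = 2 * a ∧ β₂ = 2 * (a + b + c) := by
  simp only [sub_sub, sub_nonneg] at hsym
  have hle : α₂ ≤ β₂ :=
    le_of_pow_add_pow_le_pow_add_pow (b := (2 : R)) le_rfl hβ
      (by simpa only [one_pow, one_mul] using hsym 1 2)
  have hlt : α₂ < β₂ := by
    refine hle.lt_of_ne fun h => hne ?_
    rw [Prod.mk.injEq]
    omega
  have monomial_pos (x y : R) (hx : |x| = 1) (hy : 3 < |y|) : 0 < x ^ β₁ * y ^ β₂ :=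
    pow_mul_pow_pos_of_symmetrization_le (by omega) (by omega) hlt hx hy (hsym x y)
  have hβ₁ : Even β₁ :=
    even_of_pow_pos_of_neg (neg_one_lt_zero (R := R)) <|
      pos_of_mul_pos_left (monomial_pos (-1) 4 (by simp) (by norm_num)) (by positivity)
  have hβ₂ : Even β₂ :=
    even_of_pow_pos_of_neg (neg_lt_zero.mpr (zero_lt_four (α := R))) <| by
      simpa only [one_pow, one_mul] using monomial_pos 1 (-4) abs_one (by norm_num)
  obtain ⟨a, rfl⟩ := hβ₁.two_dvd
  obtain ⟨n, rfl⟩ := hβ₂.two_dvd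
  exact ⟨a, (α₂ - α₁) / 2, α₁ - 2 * a, by omega, by omega, rfl, by omega⟩

end LinearOrderedRing

theorem two_factor_characterization (α₁ α₂ β₁ β₂ : ℕ)
    (hα : α₁ ≤ α₂) (hβ : β₁ ≤ β₂)
    (hsum : α₁ + α₂ = β₁ + β₂)
    (hne : (α₁, α₂) ≠ (β₁, β₂))
    (hsym : ∀ x₁ x₂ : ℝ,
      0 ≤ x₁ ^ β₁ * x₂ ^ β₂ + x₁ ^ β₂ * x₂ ^ β₁ - x₁ ^ α₁ * x₂ ^ α₂ - x₁ ^ α₂ * x₂ ^ α₁) :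
    ∃ a b c : ℕ, α₁ = 2 * a + c ∧ α₂ = 2 * (a + b) + c ∧ β₁ = 2 * a ∧ β₂ = 2 * (a + b + c) :=
  two_factor_characterization_general α₁ α₂ β₁ β₂ hα hβ hsum hne hsym
end

section
/- Let k ≥ 1 and α ∈ ℕ^k with α_1 + ⋯ + α_k = 2d. Then for every finite simple graph G, w_{α_1}(G) ⋯ w_{α_k}(G) ≤ w_0(G)^{k−1} · w_{2d}(G), where w_j(G) denotes the number of walks of length j in G. -/
/-! For a symmetric operator `T` and a vector `v`, Cauchy–Schwarz makes the sequence `‖T ^ n v‖`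
log-convex, and bounds the moment `⟪v, T ^ a v⟫` by `‖T ^ b v‖ * ‖T ^ c v‖` for any splitting
`a = b + c`. If `a ≤ 2 * d`, splitting `a` as evenly as possible keeps `b` and `c` at most `d`, so
log-convexity bounds the moment by `‖v‖ ^ (2 - a / d) * ‖T ^ d v‖ ^ (a / d)`; multiplying these
bounds, the exponents of `‖T ^ d v‖` add up to `2`. Walk numbers are the moments of the adjacency
matrix at the all-ones vector. -/

open Finset

/-- The number of walks of length `k` in a graph `G`, computed as
`𝟙ᵀ A^k 𝟙 = ∑_{x,y} (A^k)_{x,y}` for the adjacency matrix `A`. -/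
noncomputable def walkNum {V : Type*} [Fintype V] [DecidableEq V] (G : SimpleGraph V)
    [DecidableRel G.Adj] (k : ℕ) : ℝ :=
  ∑ x : V, ∑ y : V, ((G.adjMatrix ℝ) ^ k) x y

section LogConvexSequence

variable {R : Type*} [CommSemiring R] [LinearOrder R] [IsStrictOrderedRing R] {u : ℕ → R}

lemma pow_succ_le_mul_pow_of_sq_le_mul (hu₀ : ∀ n, 0 ≤ u n)
    (hu : ∀ n, u (n + 1) ^ 2 ≤ u n * u (n + 2)) (n : ℕ) :
    u n ^ (n + 1) ≤ u 0 * u (n + 1) ^ n := by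
  induction n with
  | zero => simp
  | succ n ih =>
    rcases (hu₀ (n + 1)).eq_or_lt with hzero | hpos
    · rw [← hzero, zero_pow (by omega)]
      exact mul_nonneg (hu₀ 0) (pow_nonneg (hu₀ _) _)
    · refine le_of_mul_le_mul_left ?_ (pow_pos hpos n)
      calc u (n + 1) ^ n * u (n + 1) ^ (n + 1 + 1)
          = (u (n + 1) ^ 2) ^ (n + 1) := by ring
        _ ≤ (u n * u (n + 2)) ^ (n + 1) := pow_le_pow_left₀ (pow_nonneg (hu₀ _) _) (hu n) _
        _ = u n ^ (n + 1) * u (n + 2) ^ (n + 1) := mul_pow _ _ _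
        _ ≤ u 0 * u (n + 1) ^ n * u (n + 2) ^ (n + 1) :=
          mul_le_mul_of_nonneg_right ih (pow_nonneg (hu₀ _) _)
        _ = u (n + 1) ^ n * (u 0 * u (n + 1 + 1) ^ (n + 1)) := by ring

lemma pow_add_le_pow_mul_pow_of_sq_le_mul (hu₀ : ∀ n, 0 ≤ u n)
    (hu : ∀ n, u (n + 1) ^ 2 ≤ u n * u (n + 2)) (m k : ℕ) :
    u m ^ (m + k) ≤ u 0 ^ k * u (m + k) ^ m := by
  induction k with
  | zero => simp
  | succ k ih =>
    rcases Nat.eq_zero_or_pos (m + k) with hmk | hmk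
    · obtain ⟨rfl, rfl⟩ : m = 0 ∧ k = 0 := by omega
      simp
    · refine le_of_pow_le_pow_left₀ hmk.ne'
        (mul_nonneg (pow_nonneg (hu₀ _) _) (pow_nonneg (hu₀ _) _)) ?_
      calc (u m ^ (m + (k + 1))) ^ (m + k)
          = (u m ^ (m + k)) ^ (m + k + 1) := by ring
        _ ≤ (u 0 ^ k * u (m + k) ^ m) ^ (m + k + 1) :=
          pow_le_pow_left₀ (pow_nonneg (hu₀ _) _) ih _
        _ = u 0 ^ (k * (m + k + 1)) * (u (m + k) ^ (m + k + 1)) ^ m := by ring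
        _ ≤ u 0 ^ (k * (m + k + 1)) * (u 0 * u (m + k + 1) ^ (m + k)) ^ m :=
          mul_le_mul_of_nonneg_left
            (pow_le_pow_left₀ (pow_nonneg (hu₀ _) _)
              (pow_succ_le_mul_pow_of_sq_le_mul hu₀ hu (m + k)) m)
            (pow_nonneg (hu₀ _) _)
        _ = (u 0 ^ (k + 1) * u (m + (k + 1)) ^ m) ^ (m + k) := by
          rw [← add_assoc]
          ring

end LogConvexSequence

section SymmetricOperator

open scoped InnerProductSpace

variable {𝕜 E : Type*} [RCLike 𝕜] [SeminormedAddCommGroup E] [InnerProductSpace 𝕜 E]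
  {T : E →ₗ[𝕜] E}

lemma inner_pow_add_apply (hT : T.IsSymmetric) (v : E) (a b : ℕ) :
    ⟪v, (T ^ (a + b)) v⟫_𝕜 = ⟪(T ^ a) v, (T ^ b) v⟫_𝕜 := by
  rw [pow_add, Module.End.mul_apply, hT.pow a]

lemma norm_inner_pow_add_apply_le (hT : T.IsSymmetric) (v : E) (a b : ℕ) :
    ‖⟪v, (T ^ (a + b)) v⟫_𝕜‖ ≤ ‖(T ^ a) v‖ * ‖(T ^ b) v‖ := by
  rw [inner_pow_add_apply hT]
  exact norm_inner_le_norm _ _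

lemma norm_inner_pow_two_mul_apply (hT : T.IsSymmetric) (v : E) (a : ℕ) :
    ‖⟪v, (T ^ (2 * a)) v⟫_𝕜‖ = ‖(T ^ a) v‖ ^ 2 := by
  rw [two_mul, inner_pow_add_apply hT, inner_self_eq_norm_sq_to_K, norm_pow, RCLike.norm_ofReal,
    abs_norm]

lemma norm_pow_succ_apply_sq_le (hT : T.IsSymmetric) (v : E) (n : ℕ) :
    ‖(T ^ (n + 1)) v‖ ^ 2 ≤ ‖(T ^ n) v‖ * ‖(T ^ (n + 2)) v‖ := by
  rw [← norm_inner_pow_two_mul_apply hT, show 2 * (n + 1) = n + (n + 2) by ring]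
  exact norm_inner_pow_add_apply_le hT v n (n + 2)

lemma norm_pow_apply_pow_le (hT : T.IsSymmetric) (v : E) {b d : ℕ} (hb : b ≤ d) :
    ‖(T ^ b) v‖ ^ d ≤ ‖v‖ ^ (d - b) * ‖(T ^ d) v‖ ^ b := by
  simpa [Nat.add_sub_of_le hb] using pow_add_le_pow_mul_pow_of_sq_le_mul
    (fun n ↦ norm_nonneg ((T ^ n) v)) (norm_pow_succ_apply_sq_le hT v) b (d - b)

lemma norm_inner_pow_apply_pow_le (hT : T.IsSymmetric) (v : E) {a d : ℕ} (ha : a ≤ 2 * d) :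
    ‖⟪v, (T ^ a) v⟫_𝕜‖ ^ d ≤ ‖v‖ ^ (2 * d - a) * ‖(T ^ d) v‖ ^ a := by
  obtain ⟨b, c, rfl, hb, hc⟩ : ∃ b c, a = b + c ∧ b ≤ d ∧ c ≤ d :=
    ⟨a / 2, a - a / 2, by omega, by omega, by omega⟩
  calc ‖⟪v, (T ^ (b + c)) v⟫_𝕜‖ ^ d
      ≤ (‖(T ^ b) v‖ * ‖(T ^ c) v‖) ^ d :=
        pow_le_pow_left₀ (norm_nonneg _) (norm_inner_pow_add_apply_le hT v b c) d
    _ = ‖(T ^ b) v‖ ^ d * ‖(T ^ c) v‖ ^ d := mul_pow _ _ _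
    _ ≤ (‖v‖ ^ (d - b) * ‖(T ^ d) v‖ ^ b) * (‖v‖ ^ (d - c) * ‖(T ^ d) v‖ ^ c) := by
        gcongr <;> exact norm_pow_apply_pow_le hT v ‹_›
    _ = ‖v‖ ^ (2 * d - (b + c)) * ‖(T ^ d) v‖ ^ (b + c) := by
        rw [show 2 * d - (b + c) = (d - b) + (d - c) by omega]
        ring

theorem walk_prod_le_pow_mul_general (hT : T.IsSymmetric) (v : E) {ι : Type*} {s : Finset ι}
    (hs : s.Nonempty) {α : ι → ℕ} {d : ℕ} (hα : ∑ t ∈ s, α t = 2 * d) :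
    ∏ t ∈ s, ‖⟪v, (T ^ α t) v⟫_𝕜‖ ≤ ‖⟪v, v⟫_𝕜‖ ^ (#s - 1) * ‖⟪v, (T ^ (2 * d)) v⟫_𝕜‖ := by
  rcases Nat.eq_zero_or_pos d with rfl | hd
  · have hzero : ∀ t ∈ s, α t = 0 := Finset.sum_eq_zero_iff.mp hα
    rw [Finset.prod_congr rfl fun t ht ↦ by rw [hzero t ht, pow_zero, Module.End.one_apply],
      prod_const, mul_zero, pow_zero, Module.End.one_apply, pow_sub_one_mul hs.card_ne_zero]
  have hle : ∀ t ∈ s, α t ≤ 2 * d := fun t ht ↦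
    hα ▸ single_le_sum (fun _ _ ↦ Nat.zero_le _) ht
  have hexp : ∑ t ∈ s, (2 * d - α t) = 2 * (#s - 1) * d := by
    rw [sum_tsub_distrib s hle, hα, sum_const, smul_eq_mul, ← Nat.sub_one_mul]
    ring
  refine le_of_pow_le_pow_left₀ hd.ne' (by positivity) ?_
  calc (∏ t ∈ s, ‖⟪v, (T ^ α t) v⟫_𝕜‖) ^ d
      = ∏ t ∈ s, ‖⟪v, (T ^ α t) v⟫_𝕜‖ ^ d := (prod_pow _ _ _).symm
    _ ≤ ∏ t ∈ s, ‖v‖ ^ (2 * d - α t) * ‖(T ^ d) v‖ ^ α t :=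
        prod_le_prod (fun _ _ ↦ by positivity) fun t ht ↦
          norm_inner_pow_apply_pow_le hT v (hle t ht)
    _ = ‖v‖ ^ (2 * (#s - 1) * d) * ‖(T ^ d) v‖ ^ (2 * d) := by
        rw [prod_mul_distrib, prod_pow_eq_pow_sum, prod_pow_eq_pow_sum, hexp, hα]
    _ = (‖⟪v, v⟫_𝕜‖ ^ (#s - 1) * ‖⟪v, (T ^ (2 * d)) v⟫_𝕜‖) ^ d := by
        rw [norm_inner_pow_two_mul_apply hT, inner_self_eq_norm_sq_to_K, norm_pow,
          RCLike.norm_ofReal, abs_norm]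
        ring

end SymmetricOperator

section WalkNumber

open scoped InnerProductSpace

variable {V : Type*} [Fintype V] [DecidableEq V] (G : SimpleGraph V) [DecidableRel G.Adj]

lemma isSymmetric_toEuclideanLin_adjMatrix :
    (G.adjMatrix ℝ).toEuclideanLin.IsSymmetric :=
  Matrix.isSymmetric_toEuclideanLin_iff.mpr <| by
    rw [Matrix.IsHermitian, Matrix.conjTranspose_eq_transpose_of_trivial, G.transpose_adjMatrix]

lemma walkNum_nonneg (k : ℕ) : 0 ≤ walkNum G k :=
  sum_nonneg fun x _ ↦ sum_nonneg fun y _ ↦ by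
    rw [SimpleGraph.adjMatrix_pow_apply_eq_card_walk]
    exact Nat.cast_nonneg _

lemma walkNum_eq_norm_inner (k : ℕ) :
    walkNum G k =
      ‖⟪WithLp.toLp 2 1, ((G.adjMatrix ℝ).toEuclideanLin ^ k) (WithLp.toLp 2 1)⟫_ℝ‖ := by
  rw [← Real.norm_of_nonneg (walkNum_nonneg G k), ← Matrix.toLpLin_pow, Matrix.toLpLin_apply,
    EuclideanSpace.inner_toLp_toLp, star_trivial, dotProduct_one]
  simp only [walkNum, Matrix.mulVec, dotProduct_one]

end WalkNumber

theorem walk_prod_le_pow_mul {k d : ℕ} (hk : 1 ≤ k)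
    (α : Fin k → ℕ) (hα : ∑ t, α t = 2 * d)
    (V : Type) [Fintype V] [DecidableEq V] (G : SimpleGraph V) [DecidableRel G.Adj] :
    ∏ t, walkNum G (α t) ≤ walkNum G 0 ^ (k - 1) * walkNum G (2 * d) := by
  have : Nonempty (Fin k) := ⟨⟨0, hk⟩⟩
  simpa [walkNum_eq_norm_inner] using walk_prod_le_pow_mul_general
    (isSymmetric_toEuclideanLin_adjMatrix G) (WithLp.toLp 2 1) univ_nonempty hα
end

section
/- Let k ≥ 1, let α ∈ ℕ^k, and let σ be a permutation of {1, …, k}. Then for every finite simple graph G, w_{α_1 + α_{σ(1)}}(G) ⋯ w_{α_k + α_{σ(k)}}(G) ≤ w_{2α_1}(G) ⋯ w_{2α_k}(G), where w_j(G) denotes the number of walks of length j in G. -/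
/-!
Write `A` for the adjacency matrix. Since `A` is symmetric, `w_{a+b} = ⟪A^a 𝟙, A^b 𝟙⟫`, and in
particular `w_{2a} = ‖A^a 𝟙‖²`. Cauchy–Schwarz bounds the `i`-th factor on the left by
`‖A^{α_i} 𝟙‖ ‖A^{α_{σ(i)}} 𝟙‖`; as `σ` is a permutation, each norm `‖A^{α_i} 𝟙‖` then occurs exactly
twice in the product over `i`. The argument is one about the moments `⟪v, T^k v⟫` of a symmetric
operator `T` on an inner product space; the walk numbers are the case `T = A`, `v = 𝟙`.
-/

open Finset

open scoped InnerProductSpace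

section InnerProduct

variable {𝕜 E ι : Type*} [RCLike 𝕜] [SeminormedAddCommGroup E] [InnerProductSpace 𝕜 E]

theorem prod_norm_inner_perm_le [Fintype ι] (x y : ι → E) (σ : Equiv.Perm ι) :
    ∏ i, ‖⟪x i, y (σ i)⟫_𝕜‖ ≤ (∏ i, ‖x i‖) * ∏ i, ‖y i‖ :=
  calc ∏ i, ‖⟪x i, y (σ i)⟫_𝕜‖
    _ ≤ ∏ i, ‖x i‖ * ‖y (σ i)‖ :=
      prod_le_prod (fun _ _ ↦ norm_nonneg _) fun _ _ ↦ norm_inner_le_norm _ _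
    _ = (∏ i, ‖x i‖) * ∏ i, ‖y i‖ := by
      rw [prod_mul_distrib, Equiv.prod_comp σ fun i ↦ ‖y i‖]

variable {T : E →ₗ[𝕜] E}

theorem inner_pow_add_apply_of_isSymmetric (hT : T.IsSymmetric) (v w : E) (a b : ℕ) :
    ⟪v, (T ^ (a + b)) w⟫_𝕜 = ⟪(T ^ a) v, (T ^ b) w⟫_𝕜 := by
  rw [pow_add, Module.End.mul_apply, hT.pow a]

theorem re_inner_pow_two_mul_apply_of_isSymmetric (hT : T.IsSymmetric) (v : E) (a : ℕ) :
    RCLike.re ⟪v, (T ^ (2 * a)) v⟫_𝕜 = ‖(T ^ a) v‖ * ‖(T ^ a) v‖ := by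
  rw [two_mul, inner_pow_add_apply_of_isSymmetric hT, inner_self_eq_norm_mul_norm]

theorem walk_perm_inequality_general [Fintype ι] (hT : T.IsSymmetric) (v : E) (α : ι → ℕ)
    (σ : Equiv.Perm ι) :
    ‖∏ i, ⟪v, (T ^ (α i + α (σ i))) v⟫_𝕜‖ ≤ ∏ i, RCLike.re ⟪v, (T ^ (2 * α i)) v⟫_𝕜 := by
  simp only [re_inner_pow_two_mul_apply_of_isSymmetric hT, inner_pow_add_apply_of_isSymmetric hT,
    norm_prod, prod_mul_distrib]
  exact prod_norm_inner_perm_le (fun i ↦ (T ^ α i) v) (fun i ↦ (T ^ α i) v) σ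

end InnerProduct

theorem inner_one_toEuclideanLin_one {𝕜 n : Type*} [RCLike 𝕜] [Fintype n] [DecidableEq n]
    (M : Matrix n n 𝕜) :
    ⟪WithLp.toLp 2 1, M.toEuclideanLin (WithLp.toLp 2 1)⟫_𝕜 = ∑ i, ∑ j, M i j := by
  simp [EuclideanSpace.inner_toLp_toLp, Matrix.toLpLin_toLp, Matrix.mulVec, dotProduct_one]

theorem walkNum_eq_inner {V : Type*} [Fintype V] [DecidableEq V] (G : SimpleGraph V)
    [DecidableRel G.Adj] (k : ℕ) :
    walkNum G k =
      ⟪WithLp.toLp 2 1, ((G.adjMatrix ℝ).toEuclideanLin ^ k) (WithLp.toLp 2 1)⟫_ℝ := by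
  rw [← Matrix.toLpLin_pow, inner_one_toEuclideanLin_one, walkNum]

theorem walk_perm_inequality {k : ℕ} (hk : 1 ≤ k)
    (α : Fin k → ℕ) (σ : Equiv.Perm (Fin k))
    (V : Type) [Fintype V] [DecidableEq V] (G : SimpleGraph V) [DecidableRel G.Adj] :
    ∏ i, walkNum G (α i + α (σ i)) ≤ ∏ i, walkNum G (2 * α i) := by
  have hA := Matrix.isSymmetric_toEuclideanLin_iff.mpr (G.isHermitian_adjMatrix ℝ)
  simp only [walkNum_eq_inner]
  exact (Real.le_norm_self _).trans (walk_perm_inequality_general hA _ α σ)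
end

section
/- For all a, b ∈ ℕ and every finite simple graph G, the inequality w_{a+b}(G)² ≤ w_{2a}(G) · w_{2b}(G) holds, where w_j(G) denotes the number of walks of length j in G. -/
open Finset

section DotProduct

open Matrix

variable {n R : Type*} [Fintype n]

theorem dotProduct_pow_add_mulVec_of_isSymm [DecidableEq n] [CommSemiring R] {A : Matrix n n R}
    (hA : A.IsSymm) (a b : ℕ) (u v : n → R) :
    u ⬝ᵥ A ^ (a + b) *ᵥ v = (A ^ a *ᵥ u) ⬝ᵥ (A ^ b *ᵥ v) := by
  rw [pow_add, ← mulVec_mulVec, dotProduct_mulVec, ← mulVec_transpose, (hA.pow a).eq]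

variable [CommSemiring R] [LinearOrder R] [IsStrictOrderedRing R] [ExistsAddOfLE R]

theorem dotProduct_sq_le_dotProduct_self_mul_dotProduct_self (u v : n → R) :
    (u ⬝ᵥ v) ^ 2 ≤ (u ⬝ᵥ u) * (v ⬝ᵥ v) := by
  simpa only [dotProduct, ← pow_two] using sum_mul_sq_le_sq_mul_sq univ u v

theorem dress_gutman_general [DecidableEq n] {A : Matrix n n R} (hA : A.IsSymm) (a b : ℕ)
    (u v : n → R) :
    (u ⬝ᵥ A ^ (a + b) *ᵥ v) ^ 2 ≤ (u ⬝ᵥ A ^ (2 * a) *ᵥ u) * (v ⬝ᵥ A ^ (2 * b) *ᵥ v) := by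
  simpa only [two_mul, dotProduct_pow_add_mulVec_of_isSymm hA] using
    dotProduct_sq_le_dotProduct_self_mul_dotProduct_self (A ^ a *ᵥ u) (A ^ b *ᵥ v)

theorem walkNum_eq_one_dotProduct_pow_mulVec_one {V : Type*} [Fintype V] [DecidableEq V]
    (G : SimpleGraph V) [DecidableRel G.Adj] (k : ℕ) :
    walkNum G k = 1 ⬝ᵥ G.adjMatrix ℝ ^ k *ᵥ 1 := by
  simp only [walkNum, one_dotProduct, mulVec, dotProduct_one]

end DotProduct

theorem dress_gutman (a b : ℕ)
    (V : Type) [Fintype V] [DecidableEq V] (G : SimpleGraph V) [DecidableRel G.Adj] :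
    walkNum G (a + b) ^ 2 ≤ walkNum G (2 * a) * walkNum G (2 * b) := by
  simpa only [walkNum_eq_one_dotProduct_pow_mulVec_one] using
    dress_gutman_general G.isSymm_adjMatrix a b 1 1
end
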